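/- Let p be a prime and n a positive integer. Inside a fixed algebraic closure of ℚ_p, there are only finitely many intermediate fields K such that K is a finite abelian extension of ℚ_p of degree at most n, i.e., K/ℚ_p is Galois with commutative Galois group and [K:ℚ_p] ≤ n. -/

import Mathlib

/-!
Let `K/k` be a finite abelian extension whose group has exponent dividing `N`, where `N ≠ 0` in `k`,
and let `F = k(ζ)` with `ζ` a primitive `N`-th root of unity. Then `Gal(KF/F)` embeds into
`Gal(K/k)`, so it is simultaneously diagonalizable on `KF`, and by Kummer theory its joint
eigenvectors are `N`-th roots of elements of `F`. For a locally compact `F` the `N`-th powers are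
open in `Fˣ`, and `Fˣ` is compact modulo the powers of one element of norm greater than `1`, so
`Fˣ/(Fˣ)ᴺ` is finite. Hence a single finite extension of `F` contains the `N`-th roots of all
elements of `F`, thus every such `K`, and it has only finitely many separable subextensions.
-/

section Diagonalization

open Polynomial

variable {F V : Type*} [Field F] [AddCommGroup V] [Module F V]

theorem ker_aeval_prod_X_sub_C_le_iSup_eigenspace (f : Module.End F V) (s : Finset F) :
    LinearMap.ker (aeval f (∏ c ∈ s, (X - C c))) ≤ ⨆ μ, f.eigenspace μ := by
  classical
  induction s using Finset.induction_on with
  | empty => simp [Module.End.one_eq_id]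
  | insert a s has ih =>
    have hcoprime : IsCoprime (X - C a) (∏ c ∈ s, (X - C c)) := IsCoprime.prod_right fun c hc ↦
      isCoprime_X_sub_C_of_isUnit_sub (sub_ne_zero.2 (ne_of_mem_of_not_mem hc has).symm).isUnit
    have ha : LinearMap.ker (aeval f (X - C a)) = f.eigenspace a := by
      simp only [Module.End.eigenspace_def, map_sub, aeval_X, aeval_C,
        Algebra.algebraMap_eq_smul_one]
    rw [Finset.prod_insert has, ← sup_ker_aeval_eq_ker_aeval_mul_of_coprime f hcoprime, ha]
    exact sup_le (le_iSup _ a) ih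

theorem iSup_eigenspace_eq_top_of_aeval_eq_zero {f : Module.End F V} {P : F[X]}
    (hsep : P.Separable) (hsplits : P.Splits) (hf : aeval f P = 0) :
    ⨆ μ, f.eigenspace μ = ⊤ := by
  classical
  have hP : P = C P.leadingCoeff * ∏ c ∈ P.roots.toFinset, (X - C c) := by
    rw [Finset.prod, Multiset.toFinset_val,
      (nodup_roots hsep).dedup, ← hsplits.eq_prod_roots]
  have hzero : aeval f (∏ c ∈ P.roots.toFinset, (X - C c)) = 0 := by
    rw [hP, ← smul_eq_C_mul, map_smul] at hf
    exact (smul_eq_zero.1 hf).resolve_left (leadingCoeff_ne_zero.2 hsep.ne_zero)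
  have hle := ker_aeval_prod_X_sub_C_le_iSup_eigenspace f P.roots.toFinset
  rwa [hzero, LinearMap.ker_zero, top_le_iff] at hle

theorem iSup_iInf_eigenspace_eq_top_of_aeval_eq_zero [FiniteDimensional F V] {ι : Type*}
    {f : ι → Module.End F V} (hcomm : Pairwise fun i j ↦ Commute (f i) (f j)) {P : F[X]}
    (hsep : P.Separable) (hsplits : P.Splits) (hf : ∀ i, aeval (f i) P = 0) :
    ⨆ χ : ι → F, ⨅ i, (f i).eigenspace (χ i) = ⊤ := by
  have hss (i : ι) : (f i).IsFinitelySemisimple :=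
    Module.End.IsSemisimple.isFinitelySemisimple
      (Module.End.isSemisimple_of_squarefree_aeval_eq_zero hsep.squarefree (hf i))
  simp only [← (hss _).maxGenEigenspace_eq_eigenspace]
  refine Module.End.iSup_iInf_maxGenEigenspace_eq_top_of_iSup_maxGenEigenspace_eq_top_of_commute
    f hcomm fun i ↦ ?_
  rw [(hss i).iSup_maxGenEigenspace_eq_top_iff]
  exact iSup_eigenspace_eq_top_of_aeval_eq_zero hsep hsplits (hf i)

theorem iSup_iInf_eigenspace_eq_top_of_pow_eq_one [FiniteDimensional F V] {ι : Type*}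
    {f : ι → Module.End F V} (hcomm : Pairwise fun i j ↦ Commute (f i) (f j)) {N : ℕ} [NeZero N]
    {ζ : F} (hζ : IsPrimitiveRoot ζ N) (hf : ∀ i, f i ^ N = 1) :
    ⨆ χ : ι → F, ⨅ i, (f i).eigenspace (χ i) = ⊤ :=
  iSup_iInf_eigenspace_eq_top_of_aeval_eq_zero hcomm
    (separable_X_pow_sub_C 1 hζ.neZero'.out one_ne_zero) (X_pow_sub_one_splits hζ)
    fun i ↦ by simp [hf i]

end Diagonalization

section Kummer

open IntermediateField

theorem exponent_gal_dvd_of_algHom {k L M : Type*} [Field k] [Field L] [Field M] [Algebra k L]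
    [Algebra k M] [Normal k L] [Normal k M] (f : L →ₐ[k] M) :
    Monoid.exponent Gal(L/k) ∣ Monoid.exponent Gal(M/k) := by
  let : Algebra L M := f.toRingHom.toAlgebra
  have : IsScalarTower k L M := .of_algebraMap_eq' f.comp_algebraMap.symm
  exact MonoidHom.exponent_dvd (AlgEquiv.restrictNormalHom_surjective (K₁ := L) M)

theorem isAbelianGalois_of_sup_eq_top {k E : Type*} [Field k] [Field E] [Algebra k E]
    {K F : IntermediateField k E} [FiniteDimensional k K] [IsAbelianGalois k K]
    (hKF : K ⊔ F = ⊤) : IsAbelianGalois F E where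
  toIsGalois := IsGalois.sup_right K F hKF
  toIsMulCommutative := ⟨⟨fun σ τ ↦ restrictRestrictAlgEquivMapHom_injective K F hKF <| by
    rw [map_mul, map_mul, mul_comm']⟩⟩

theorem exponent_gal_dvd_of_sup_eq_top {k E : Type*} [Field k] [Field E] [Algebra k E]
    {K F : IntermediateField k E} [Normal k K] (hKF : K ⊔ F = ⊤) :
    Monoid.exponent Gal(E/F) ∣ Monoid.exponent Gal(K/k) :=
  Monoid.exponent_dvd_of_monoidHom _ (restrictRestrictAlgEquivMapHom_injective K F hKF)

theorem span_pow_mem_range_algebraMap_eq_top {F L : Type*} [Field F] [Field L] [Algebra F L]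
    [FiniteDimensional F L] [IsAbelianGalois F L] {N : ℕ} [NeZero N] {ζ : F}
    (hζ : IsPrimitiveRoot ζ N) (hexp : Monoid.exponent Gal(L/F) ∣ N) :
    Submodule.span F {v : L | v ^ N ∈ Set.range (algebraMap F L)} = ⊤ := by
  let ρ : Gal(L/F) → Module.End F L := fun σ ↦ σ.toLinearMap
  have hcomm : Pairwise fun σ τ ↦ Commute (ρ σ) (ρ τ) := fun σ τ _ ↦
    LinearMap.ext fun x ↦ DFunLike.congr_fun (mul_comm' σ τ) x
  have hpow (σ : Gal(L/F)) : ρ σ ^ N = 1 := by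
    have hσ : σ ^ N = 1 := Monoid.exponent_dvd_iff_forall_pow_eq_one.1 hexp σ
    ext x
    rw [Module.End.pow_apply, Module.End.one_apply]
    exact (congr_fun (AlgEquiv.coe_pow σ N) x).symm.trans (DFunLike.congr_fun hσ x)
  rw [eq_top_iff, ← iSup_iInf_eigenspace_eq_top_of_pow_eq_one hcomm hζ hpow]
  refine iSup_le fun χ v hv ↦ Submodule.subset_span ?_
  rw [Set.mem_ofPred_eq, IsGalois.mem_range_algebraMap_iff_fixed]
  intro σ
  obtain rfl | hv0 := eq_or_ne v 0
  · simp [NeZero.ne N]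
  have hσv : (ρ σ).HasEigenvector (χ σ) v := ⟨(Submodule.mem_iInf _).1 hv σ, hv0⟩
  have hχ : χ σ ^ N = 1 := by
    have h : (χ σ ^ N - 1) • v = 0 := by
      rw [sub_smul, one_smul, ← hσv.pow_apply, hpow, Module.End.one_apply, sub_self]
    exact sub_eq_zero.1 ((smul_eq_zero.1 h).resolve_right hv0)
  calc σ (v ^ N) = (ρ σ v) ^ N := map_pow σ v N
    _ = v ^ N := by rw [hσv.apply_eq_smul, smul_pow, hχ, one_smul]

theorem span_pow_mem_eq_top_of_sup_eq_top {k E : Type*} [Field k] [Field E] [Algebra k E]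
    {K F : IntermediateField k E} [FiniteDimensional k K] [IsAbelianGalois k K]
    (hKF : K ⊔ F = ⊤) {N : ℕ} [NeZero N] {ζ : F} (hζ : IsPrimitiveRoot ζ N)
    (hexp : Monoid.exponent Gal(K/k) ∣ N) :
    Submodule.span F {v : E | v ^ N ∈ F} = ⊤ := by
  have : IsAbelianGalois F E := isAbelianGalois_of_sup_eq_top hKF
  have : Finite Gal(E/F) := .of_injective _ (restrictRestrictAlgEquivMapHom_injective K F hKF)
  have : FiniteDimensional F E := IsGalois.finiteDimensional_of_finite F E
  simpa using span_pow_mem_range_algebraMap_eq_top (L := E) hζ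
    ((exponent_gal_dvd_of_sup_eq_top hKF).trans hexp)

theorem coe_subset_span_pow_mem {k Ω : Type*} [Field k] [Field Ω] [Algebra k Ω]
    {K F : IntermediateField k Ω} [FiniteDimensional k K] [IsAbelianGalois k K] {N : ℕ} [NeZero N]
    {ζ : F} (hζ : IsPrimitiveRoot ζ N) (hexp : Monoid.exponent Gal(K/k) ∣ N) :
    (K : Set Ω) ⊆ Submodule.span F {v : Ω | v ^ N ∈ F} := by
  let E := K ⊔ F
  have hKE : K ≤ E := le_sup_left
  have hFE : F ≤ E := le_sup_right
  let eK := restrictAlgEquiv hKE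
  have : IsAbelianGalois k (restrict hKE) := .of_algHom eK.symm.toAlgHom
  have : FiniteDimensional k (restrict hKE) := eK.toLinearEquiv.finiteDimensional
  have hsup : restrict hKE ⊔ restrict hFE = ⊤ := by
    rw [← lift_inj, lift_top, lift_sup, lift_restrict, lift_restrict]
  have hspan := span_pow_mem_eq_top_of_sup_eq_top hsup
    (hζ.map_of_injective (restrictAlgEquiv hFE).injective)
    ((exponent_gal_dvd_of_algHom eK.symm.toAlgHom).trans hexp)
  have hmem (y : E) : (y : Ω) ∈ Submodule.span F {v : Ω | v ^ N ∈ F} := by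
    induction (hspan ▸ Submodule.mem_top : y ∈ Submodule.span _ _) using
      Submodule.span_induction with
    | mem v hv => exact Submodule.subset_span ((mem_restrict hFE _).1 hv)
    | zero => exact zero_mem _
    | add v w _ _ hv hw => exact add_mem hv hw
    | smul c v _ hv => exact Submodule.smul_mem _ ⟨c, (mem_restrict hFE _).1 c.2⟩ hv
  exact fun x hx ↦ hmem ⟨x, hKE hx⟩

theorem finiteDimensional_adjoin_pow_mem_range {F Ω : Type*} [Field F] [Field Ω] [Algebra F Ω]
    {N : ℕ} (hN : 0 < N) [(powMonoidHom N : Fˣ →* Fˣ).range.FiniteIndex] :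
    FiniteDimensional F (adjoin F {v : Ω | v ^ N ∈ Set.range (algebraMap F Ω)}) := by
  let H : Subgroup Fˣ := (powMonoidHom N).range
  let T : Set Ω := ⋃ q : Fˣ ⧸ H, {x | x ^ N = algebraMap F Ω q.out}
  have hT : T.Finite := Set.finite_iUnion fun q ↦ by
    simpa only [Polynomial.mem_nthRoots hN] using
      (Polynomial.nthRoots N (algebraMap F Ω q.out)).finite_toSet
  have hTint : ∀ x ∈ T, IsIntegral F x := fun x hx ↦ by
    obtain ⟨q, hq⟩ := Set.mem_iUnion.1 hx
    exact .of_pow hN (hq ▸ isIntegral_algebraMap)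
  have := hT.to_subtype
  have := finiteDimensional_adjoin hTint
  suffices hle : adjoin F {v : Ω | v ^ N ∈ Set.range (algebraMap F Ω)} ≤ adjoin F T from
    Module.Finite.of_injective (inclusion hle).toLinearMap (inclusion_injective hle)
  rw [adjoin_le_iff]
  rintro v ⟨a, ha⟩
  obtain rfl | hv := eq_or_ne v 0
  · exact zero_mem _
  have ha0 : a ≠ 0 := by
    rintro rfl
    exact pow_ne_zero N hv (ha.symm.trans (map_zero _))
  obtain ⟨⟨_, c, rfl⟩, hc⟩ := QuotientGroup.mk_out_eq_mul H (Units.mk0 a ha0)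
  have hvc : v * algebraMap F Ω c ∈ T := Set.mem_iUnion.2 ⟨_, by
    rw [Set.mem_ofPred_eq, hc, mul_pow, ← ha]
    simp⟩
  have hc0 : algebraMap F Ω c ≠ 0 := by simp
  rw [← mul_div_cancel_right₀ v hc0]
  exact div_mem (subset_adjoin F T hvc) (_root_.algebraMap_mem _ _)

theorem le_of_forall_finiteGalois_le {k Ω : Type*} [Field k] [Field Ω] [Algebra k Ω]
    {K M : IntermediateField k Ω} [IsGalois k K]
    (h : ∀ L ≤ K, FiniteDimensional k L → IsGalois k L → L ≤ M) : K ≤ M := by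
  intro x hx
  let L := FiniteGaloisIntermediateField.adjoin k {(⟨x, hx⟩ : K)}
  let e := liftAlgEquiv L.toIntermediateField
  have hxL : x ∈ lift L.toIntermediateField :=
    (mem_lift ⟨x, hx⟩).2 (FiniteGaloisIntermediateField.subset_adjoin k _ rfl)
  exact h _ (lift_le _) e.toLinearEquiv.finiteDimensional (.of_algEquiv e) hxL

theorem finite_setOf_le_and_isSeparable {k Ω : Type*} [Field k] [Field Ω] [Algebra k Ω]
    (M : IntermediateField k Ω) [FiniteDimensional k M] :
    {K : IntermediateField k Ω | K ≤ M ∧ Algebra.IsSeparable k K}.Finite := by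
  let M' := M ⊓ separableClosure k Ω
  have : Finite (IntermediateField k M') :=
    Field.finite_intermediateField_of_exists_primitive_element k M'
      (Field.exists_primitive_element k M')
  refine (Set.finite_range (lift (F := M'))).subset fun K hK ↦ ?_
  have := hK.2
  have hKM : K ≤ M' := le_inf hK.1 (le_separableClosure k Ω K)
  exact ⟨restrict hKM, lift_restrict hKM⟩

end Kummer

section LocalField

variable {F : Type*} [NontriviallyNormedField F]

theorem isOpen_range_powMonoidHom_units [CompleteSpace F] {N : ℕ} (hN : (N : F) ≠ 0) :
    IsOpen ((powMonoidHom N : Fˣ →* Fˣ).range : Set Fˣ) := by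
  have hmap : (nhds (1 : F)).map (· ^ N) = nhds 1 := by
    simpa using (hasStrictDerivAt_pow N (1 : F)).map_nhds_eq (by simpa using hN)
  have hN0 : N ≠ 0 := by rintro rfl; exact hN Nat.cast_zero
  refine Subgroup.isOpen_of_mem_nhds _ (g := 1) ?_
  rw [Units.isEmbedding_val₀.nhds_eq_comap, Units.val_one, ← hmap]
  refine ⟨Set.range (· ^ N), Filter.mem_map.2 (Filter.univ_mem' Set.mem_range_self), ?_⟩
  rintro u ⟨x, hx⟩
  have hx0 : x ≠ 0 := by
    rintro rfl
    exact u.ne_zero (by simpa [hN0] using hx.symm)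
  exact ⟨Units.mk0 x hx0, Units.ext hx⟩

theorem isCompact_units_norm_mem_Icc [ProperSpace F] {r : ℝ} (hr : 0 < r) (R : ℝ) :
    IsCompact {u : Fˣ | ‖(u : F)‖ ∈ Set.Icc r R} := by
  have himage : Units.val '' {u : Fˣ | ‖(u : F)‖ ∈ Set.Icc r R} =
      {x | r ≤ ‖x‖} ∩ Metric.closedBall 0 R := by
    ext x
    constructor
    · rintro ⟨u, hu, rfl⟩
      exact ⟨hu.1, mem_closedBall_zero_iff.2 hu.2⟩
    · rintro ⟨hrx, hxR⟩
      have hx0 : x ≠ 0 := norm_pos_iff.1 (hr.trans_le hrx)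
      exact ⟨Units.mk0 x hx0, ⟨hrx, mem_closedBall_zero_iff.1 hxR⟩, rfl⟩
  rw [Units.isEmbedding_val₀.isCompact_iff, himage]
  exact (isCompact_closedBall 0 R).inter_left (isClosed_le continuous_const continuous_norm)

theorem finiteIndex_range_powMonoidHom_units [ProperSpace F] {N : ℕ} (hN : (N : F) ≠ 0) :
    (powMonoidHom N : Fˣ →* Fˣ).range.FiniteIndex := by
  let H : Subgroup Fˣ := (powMonoidHom N).range
  have hN0 : N ≠ 0 := by rintro rfl; exact hN Nat.cast_zero
  obtain ⟨c, hc⟩ := NormedField.exists_one_lt_norm F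
  have hcN : 1 < ‖c ^ N‖ := by rw [norm_pow]; exact one_lt_pow₀ hc hN0
  have hc0 : c ≠ 0 := norm_pos_iff.1 (one_pos.trans hc)
  let A : Set Fˣ := {u | ‖(u : F)‖ ∈ Set.Icc (1 / ‖c ^ N‖) 1}
  have hA : IsCompact A := isCompact_units_norm_mem_Icc (by positivity) 1
  have hsurj : ((↑) '' A : Set (Fˣ ⧸ H)) = Set.univ := by
    refine Set.eq_univ_of_forall fun q ↦ ?_
    obtain ⟨u, rfl⟩ := QuotientGroup.mk_surjective q
    obtain ⟨n, -, hlt, hle, -⟩ := rescale_to_shell_zpow hcN one_pos u.ne_zero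
    let d : Fˣ := Units.mk0 c hc0 ^ n
    have hd : ((u * d ^ N : Fˣ) : F) = (c ^ N) ^ n • (u : F) := by
      simp [d, mul_comm, ← zpow_natCast, ← zpow_mul]
    refine ⟨u * d ^ N, ?_, QuotientGroup.mk_mul_of_mem u ⟨d, rfl⟩⟩
    rw [Set.mem_ofPred_eq, hd]
    exact ⟨hle, hlt.le⟩
  have : DiscreteTopology (Fˣ ⧸ H) :=
    QuotientGroup.discreteTopology (isOpen_range_powMonoidHom_units hN)
  have : Finite (Fˣ ⧸ H) := by
    rw [← Set.finite_univ_iff, ← hsurj]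
    exact (hA.image QuotientGroup.continuous_mk).finite_of_discrete
  exact Subgroup.finiteIndex_of_finite_quotient

end LocalField

theorem finiteIndex_range_powMonoidHom_units_of_finiteDimensional (k : Type*) {F : Type*}
    [NontriviallyNormedField k] [IsUltrametricDist k] [ProperSpace k] [Field F] [Algebra k F]
    [FiniteDimensional k F] {N : ℕ} (hN : (N : k) ≠ 0) :
    (powMonoidHom N : Fˣ →* Fˣ).range.FiniteIndex := by
  let : NontriviallyNormedField F := spectralNorm.nontriviallyNormedField k F
  let : NormedAlgebra k F := spectralNorm.normedAlgebra k F
  have : ProperSpace F := FiniteDimensional.proper k F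
  refine finiteIndex_range_powMonoidHom_units ?_
  rwa [← map_natCast (algebraMap k F), map_ne_zero]

open IntermediateField in
theorem exists_finiteDimensional_forall_isAbelianGalois_le (k Ω : Type*)
    [NontriviallyNormedField k] [IsUltrametricDist k] [ProperSpace k] [Field Ω] [Algebra k Ω]
    {N : ℕ} [HasEnoughRootsOfUnity Ω N] (hN : (N : k) ≠ 0) :
    ∃ M : IntermediateField k Ω, FiniteDimensional k M ∧ ∀ K : IntermediateField k Ω,
      IsAbelianGalois k K → Monoid.exponent Gal(K/k) ∣ N → K ≤ M := by
  have : NeZero N := ⟨by rintro rfl; exact hN Nat.cast_zero⟩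
  obtain ⟨ζ, hζ⟩ := HasEnoughRootsOfUnity.exists_primitiveRoot Ω N
  let F : IntermediateField k Ω := adjoin k {ζ}
  have : FiniteDimensional k F := adjoin.finiteDimensional (hζ.isIntegral (NeZero.pos N)).tower_top
  have hζF : IsPrimitiveRoot (⟨ζ, mem_adjoin_simple_self k ζ⟩ : F) N :=
    .of_map_of_injective (f := algebraMap F Ω) hζ (algebraMap F Ω).injective
  have := finiteIndex_range_powMonoidHom_units_of_finiteDimensional k (F := F) hN
  let M := adjoin F {v : Ω | v ^ N ∈ Set.range (algebraMap F Ω)}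
  have : FiniteDimensional F M := finiteDimensional_adjoin_pow_mem_range (NeZero.pos N)
  have hkM : FiniteDimensional k M := .trans k F M
  refine ⟨M.restrictScalars k, hkM, fun K hK hexp ↦ ?_⟩
  refine le_of_forall_finiteGalois_le fun L hL _ _ ↦ ?_
  have : IsAbelianGalois k L := .of_algHom (inclusion hL)
  have hLN := (exponent_gal_dvd_of_algHom (inclusion hL)).trans hexp
  have hspan : Submodule.span F {v : Ω | v ^ N ∈ F} ≤ M.toSubmodule :=
    Submodule.span_le.2 fun v hv ↦ subset_adjoin F _ ⟨⟨v ^ N, hv⟩, rfl⟩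
  exact fun x hx ↦ hspan (coe_subset_span_pow_mem hζF hLN hx)

open IntermediateField in
theorem finite_abelian_extensions_of_padic_of_bounded_degree_general (k Ω : Type*)
    [NontriviallyNormedField k] [IsUltrametricDist k] [ProperSpace k] [Field Ω] [Algebra k Ω]
    {N : ℕ} (hN : (N : k) ≠ 0) :
    {K : IntermediateField k Ω | IsAbelianGalois k K ∧ Monoid.exponent Gal(K/k) ∣ N}.Finite := by
  -- `Ω` need not contain the `N`-th roots of unity, its algebraic closure does.
  have : NeZero (N : AlgebraicClosure Ω) :=
    ⟨by rwa [← map_natCast (algebraMap k (AlgebraicClosure Ω)), map_ne_zero]⟩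
  let i : Ω →ₐ[k] AlgebraicClosure Ω := IsScalarTower.toAlgHom k Ω (AlgebraicClosure Ω)
  obtain ⟨M, _, hM⟩ := exists_finiteDimensional_forall_isAbelianGalois_le k (AlgebraicClosure Ω) hN
  refine ((finite_setOf_le_and_isSeparable M).preimage (map_injective i).injOn).subset ?_
  rintro K ⟨hK, hexp⟩
  let e := K.equivMap i
  have hiK : IsAbelianGalois k (K.map i) := .of_algHom e.symm.toAlgHom
  exact ⟨hM _ hiK ((exponent_gal_dvd_of_algHom e.symm.toAlgHom).trans hexp), inferInstance⟩

theorem exponent_gal_dvd_factorial {k K : Type*} [Field k] [Field K] [Algebra k K]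
    [FiniteDimensional k K] {n : ℕ} (hn : Module.finrank k K ≤ n) :
    Monoid.exponent Gal(K/k) ∣ n.factorial := by
  have hcard : Nat.card Gal(K/k) ≤ n :=
    Nat.card_eq_fintype_card.trans_le (AlgEquiv.card_le.trans hn)
  exact Group.exponent_dvd_nat_card.trans (Nat.dvd_factorial Nat.card_pos hcard)

/-- Let `p` be a prime and `n` a positive integer.  Inside a fixed algebraic closure of
`ℚ_p`, there are only finitely many intermediate fields `K` that are finite abelian
extensions of `ℚ_p` of degree at most `n`, i.e. `K/ℚ_p` is Galois with commutative Galois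
group and `[K : ℚ_p] ≤ n`. -/
theorem finite_abelian_extensions_of_padic_of_bounded_degree
    (p : ℕ) [Fact p.Prime] (n : ℕ) (hn : 0 < n) :
    {K : IntermediateField ℚ_[p] (AlgebraicClosure ℚ_[p]) |
      FiniteDimensional ℚ_[p] K ∧ IsGalois ℚ_[p] K ∧
        (∀ σ τ : K ≃ₐ[ℚ_[p]] K, σ * τ = τ * σ) ∧
        Module.finrank ℚ_[p] K ≤ n}.Finite := by
  have hfact : (n.factorial : ℚ_[p]) ≠ 0 := Nat.cast_ne_zero.2 n.factorial_ne_zero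
  refine (finite_abelian_extensions_of_padic_of_bounded_degree_general _ _ hfact).subset ?_
  rintro K ⟨_, _, hcomm, hdeg⟩
  exact ⟨{ is_comm.comm := hcomm }, exponent_gal_dvd_factorial hdeg⟩
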